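/- The function x ↦ (2/x² − sin(2x)/x³), extended by its limit 4/3 at x = 0, is a smooth, bounded function on ℝ, and can be written as F₁(x²) for a smooth function F₁ with all derivatives bounded. -/

import Mathlib

open Real

/-!
Expanding the sine, `2 / x ^ 2 - sin (2 * x) / x ^ 3` is an everywhere convergent power series in
`t = x ^ 2`, so it equals `G (x ^ 2)` for an entire function `G`. For `t > 1` we have
`G t = 2 * t⁻¹ - sin (2 * √t) * t ^ (-3 / 2)`. All derivatives of this are bounded: those of a
power `t ^ r` are bounded on `(1, ∞)` from order `r` on, so the Leibniz and Faà di Bruno formulas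
apply, although `√t` itself is unbounded. For `t < 0` the function `G` grows exponentially, but
the values there are irrelevant and are removed by a smooth cutoff.
-/

open Set
open scoped ContDiff

section BoundedDerivs

variable {𝕜 E F G A : Type*} [NontriviallyNormedField 𝕜]
  [NormedAddCommGroup E] [NormedSpace 𝕜 E] [NormedAddCommGroup F] [NormedSpace 𝕜 F]
  [NormedAddCommGroup G] [NormedSpace 𝕜 G] [NormedRing A] [NormedAlgebra 𝕜 A]
  {s : Set E}

variable (𝕜) in
/-- `f` is smooth on `s` and each of its derivatives, including `f` itself, is bounded on `s`. The
derivatives are taken within `s`, so they are only meaningful on sets with unique derivatives. -/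
structure HasBoundedDerivsOn (f : E → F) (s : Set E) : Prop where
  contDiffOn : ContDiffOn 𝕜 ∞ f s
  exists_bound (k : ℕ) : ∃ C, ∀ x ∈ s, ‖iteratedFDerivWithin 𝕜 k f s x‖ ≤ C

namespace HasBoundedDerivsOn

theorem congr {f g : E → F} (hf : HasBoundedDerivsOn 𝕜 f s) (hgf : EqOn g f s) :
    HasBoundedDerivsOn 𝕜 g s where
  contDiffOn := hf.contDiffOn.congr hgf
  exists_bound k := by
    obtain ⟨C, hC⟩ := hf.exists_bound k
    exact ⟨C, fun x hx => iteratedFDerivWithin_congr (𝕜 := 𝕜) hgf hx k ▸ hC x hx⟩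

theorem zero : HasBoundedDerivsOn 𝕜 (0 : E → F) s where
  contDiffOn := contDiffOn_const
  exists_bound _ := ⟨0, fun _ _ => by simp⟩

theorem const_smul {f : E → F} (hf : HasBoundedDerivsOn 𝕜 f s) (hs : UniqueDiffOn 𝕜 s) (c : 𝕜) :
    HasBoundedDerivsOn 𝕜 (c • f) s where
  contDiffOn := hf.contDiffOn.const_smul c
  exists_bound k := by
    obtain ⟨C, hC⟩ := hf.exists_bound k
    refine ⟨‖c‖ * C, fun x hx => ?_⟩
    rw [iteratedFDerivWithin_const_smul_apply
      ((hf.contDiffOn x hx).of_le (by exact_mod_cast le_top)) hs hx, norm_smul]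
    gcongr
    exact hC x hx

theorem sub {f g : E → F} (hf : HasBoundedDerivsOn 𝕜 f s) (hg : HasBoundedDerivsOn 𝕜 g s)
    (hs : UniqueDiffOn 𝕜 s) : HasBoundedDerivsOn 𝕜 (f - g) s where
  contDiffOn := hf.contDiffOn.sub hg.contDiffOn
  exists_bound k := by
    obtain ⟨C, hC⟩ := hf.exists_bound k
    obtain ⟨D, hD⟩ := hg.exists_bound k
    have hk : (k : ℕ∞ω) ≤ ∞ := by exact_mod_cast le_top
    refine ⟨C + D, fun x hx => ?_⟩
    rw [iteratedFDerivWithin_sub_apply ((hf.contDiffOn x hx).of_le hk)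
      ((hg.contDiffOn x hx).of_le hk) hs hx]
    exact (norm_sub_le _ _).trans (add_le_add (hC x hx) (hD x hx))

theorem mul {f g : E → A} (hf : HasBoundedDerivsOn 𝕜 f s) (hg : HasBoundedDerivsOn 𝕜 g s)
    (hs : UniqueDiffOn 𝕜 s) : HasBoundedDerivsOn 𝕜 (f * g) s where
  contDiffOn := hf.contDiffOn.mul hg.contDiffOn
  exists_bound k := by
    choose C hC using hf.exists_bound
    choose D hD using hg.exists_bound
    refine ⟨∑ i ∈ Finset.range (k + 1), (k.choose i : ℝ) * C i * D (k - i), fun x hx => ?_⟩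
    refine (norm_iteratedFDerivWithin_mul_le hf.contDiffOn hg.contDiffOn hs hx
      (by exact_mod_cast le_top)).trans (Finset.sum_le_sum fun i _ => ?_)
    have hCi : 0 ≤ C i := (norm_nonneg _).trans (hC i x hx)
    gcongr
    exacts [hC i x hx, hD (k - i) x hx]

theorem comp {g : F → G} {f : E → F} {t : Set F} (hg : HasBoundedDerivsOn 𝕜 g t)
    (hf : ContDiffOn 𝕜 ∞ f s)
    (hf_bound : ∀ k, 1 ≤ k → ∃ C, ∀ x ∈ s, ‖iteratedFDerivWithin 𝕜 k f s x‖ ≤ C)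
    (ht : UniqueDiffOn 𝕜 t) (hs : UniqueDiffOn 𝕜 s) (hst : MapsTo f s t) :
    HasBoundedDerivsOn 𝕜 (g ∘ f) s where
  contDiffOn := hg.contDiffOn.comp hf hst
  exists_bound k := by
    choose C hC using hg.exists_bound
    choose! D hD using hf_bound
    obtain ⟨M, hM⟩ := ((Finset.range (k + 1)).image C).bddAbove
    obtain ⟨N, hN⟩ := ((Finset.range (k + 1)).image D).bddAbove
    refine ⟨k.factorial * M * (max 1 N) ^ k, fun x hx =>
      norm_iteratedFDerivWithin_comp_le hg.contDiffOn hf (by exact_mod_cast le_top) ht hs hst hx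
        (fun i hi => ?_) fun i hi₁ hi => ?_⟩
    · exact (hC i _ (hst hx)).trans (hM (by simpa using ⟨i, by lia, rfl⟩))
    · calc ‖iteratedFDerivWithin 𝕜 i f s x‖ ≤ D i := hD i hi₁ x hx
        _ ≤ N := hN (by simpa using ⟨i, by lia, rfl⟩)
        _ ≤ max 1 N := le_max_right 1 N
        _ ≤ max 1 N ^ i := le_self_pow₀ (le_max_left 1 N) (by lia)

end HasBoundedDerivsOn

end BoundedDerivs

section RealLine

variable {F : Type*} [NormedAddCommGroup F] [NormedSpace ℝ F]

theorem norm_iteratedFDerivWithin_eq_norm_iteratedDeriv_of_isOpen {s : Set ℝ} (hs : IsOpen s)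
    (f : ℝ → F) (k : ℕ) {x : ℝ} (hx : x ∈ s) :
    ‖iteratedFDerivWithin ℝ k f s x‖ = ‖iteratedDeriv k f x‖ := by
  rw [norm_iteratedFDerivWithin_eq_norm_iteratedDerivWithin, iteratedDerivWithin_of_isOpen hs hx]

theorem hasBoundedDerivsOn_iff_of_isOpen {s : Set ℝ} (hs : IsOpen s) {f : ℝ → F} :
    HasBoundedDerivsOn ℝ f s ↔
      ContDiffOn ℝ ∞ f s ∧ ∀ k, ∃ C, ∀ x ∈ s, ‖iteratedDeriv k f x‖ ≤ C := by
  constructor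
  · intro h
    refine ⟨h.contDiffOn, fun k => (h.exists_bound k).imp fun C hC x hx => ?_⟩
    exact norm_iteratedFDerivWithin_eq_norm_iteratedDeriv_of_isOpen hs f k hx ▸ hC x hx
  · rintro ⟨hf, h⟩
    refine ⟨hf, fun k => (h k).imp fun C hC x hx => ?_⟩
    exact (norm_iteratedFDerivWithin_eq_norm_iteratedDeriv_of_isOpen hs f k hx).trans_le (hC x hx)

theorem hasBoundedDerivsOn_univ_of_Iio_of_Ioi {f : ℝ → F} {a b : ℝ} (hf : ContDiff ℝ ∞ f)
    (ha : HasBoundedDerivsOn ℝ f (Iio a)) (hb : HasBoundedDerivsOn ℝ f (Ioi b)) :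
    HasBoundedDerivsOn ℝ f univ := by
  refine (hasBoundedDerivsOn_iff_of_isOpen isOpen_univ).2 ⟨hf.contDiffOn, fun k => ?_⟩
  obtain ⟨C₁, hC₁⟩ := ((hasBoundedDerivsOn_iff_of_isOpen isOpen_Iio).1 ha).2 k
  obtain ⟨C₂, hC₂⟩ := (isCompact_Icc (a := a) (b := b)).exists_bound_of_continuousOn
    (hf.continuous_iteratedDeriv k (by exact_mod_cast le_top)).continuousOn
  obtain ⟨C₃, hC₃⟩ := ((hasBoundedDerivsOn_iff_of_isOpen isOpen_Ioi).1 hb).2 k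
  refine ⟨max C₁ (max C₂ C₃), fun x _ => ?_⟩
  rcases lt_or_ge x a with hxa | hxa
  · exact le_max_of_le_left (hC₁ x hxa)
  rcases lt_or_ge b x with hxb | hxb
  · exact le_max_of_le_right (le_max_of_le_right (hC₃ x hxb))
  · exact le_max_of_le_right (le_max_of_le_left (hC₂ x ⟨hxa, hxb⟩))

theorem HasBoundedDerivsOn.exists_eqOn_Ici {f : ℝ → F} {a b : ℝ}
    (hb : HasBoundedDerivsOn ℝ f (Ioi b)) (hf : ContDiff ℝ ∞ f) (hab : a ≤ b) :
    ∃ g : ℝ → F, HasBoundedDerivsOn ℝ g univ ∧ EqOn g f (Ici a) := by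
  set g : ℝ → F := fun t => smoothTransition (t - a + 1) • f t with hg
  have g_contDiff : ContDiff ℝ ∞ g :=
    (smoothTransition.contDiff.comp (by fun_prop : ContDiff ℝ ∞ fun t : ℝ => t - a + 1)).smul hf
  have g_eq_f : EqOn g f (Ici a) := fun t ht => by
    have : 1 ≤ t - a + 1 := by linarith [mem_Ici.1 ht]
    simp only [hg, smoothTransition.one_of_one_le this, one_smul]
  have g_eq_zero : EqOn g 0 (Iio (a - 1)) := fun t ht => by
    have : t - a + 1 ≤ 0 := by linarith [mem_Iio.1 ht]
    simp only [hg, smoothTransition.zero_of_nonpos this, zero_smul, Pi.zero_apply]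
  have g_bounded_left : HasBoundedDerivsOn ℝ g (Iio (a - 1)) :=
    HasBoundedDerivsOn.zero.congr g_eq_zero
  have g_bounded_right : HasBoundedDerivsOn ℝ g (Ioi b) :=
    hb.congr (g_eq_f.mono fun _ ht => hab.trans (le_of_lt ht))
  exact ⟨g, hasBoundedDerivsOn_univ_of_Iio_of_Ioi g_contDiff g_bounded_left g_bounded_right, g_eq_f⟩

theorem contDiffOn_rpow_const_Ioi {b : ℝ} (hb : 0 < b) (r : ℝ) :
    ContDiffOn ℝ ∞ (fun t : ℝ => t ^ r) (Ioi b) :=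
  contDiffOn_id.rpow_const_of_ne fun _ ht => (hb.trans ht).ne'

theorem exists_norm_iteratedFDerivWithin_rpow_le {b : ℝ} (hb : 0 < b) {r : ℝ} {k : ℕ}
    (hrk : r ≤ k) :
    ∃ C, ∀ t ∈ Ioi b, ‖iteratedFDerivWithin ℝ k (fun t : ℝ => t ^ r) (Ioi b) t‖ ≤ C := by
  refine ⟨‖(descPochhammer ℝ k).eval r‖ * b ^ (r - k), fun t ht => ?_⟩
  rw [norm_iteratedFDerivWithin_eq_norm_iteratedDeriv_of_isOpen isOpen_Ioi _ _ ht,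
    iteratedDeriv_eq_iterate, iter_deriv_rpow_const, norm_mul,
    norm_of_nonneg (rpow_nonneg (hb.trans ht).le _)]
  gcongr ?_ * ?_
  exact rpow_le_rpow_of_nonpos hb (le_of_lt ht) (sub_nonpos.2 hrk)

theorem hasBoundedDerivsOn_rpow_const {b : ℝ} (hb : 0 < b) {r : ℝ} (hr : r ≤ 0) :
    HasBoundedDerivsOn ℝ (fun t : ℝ => t ^ r) (Ioi b) where
  contDiffOn := contDiffOn_rpow_const_Ioi hb r
  exists_bound k := exists_norm_iteratedFDerivWithin_rpow_le hb (hr.trans k.cast_nonneg)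

theorem hasBoundedDerivsOn_sin_const_mul (a : ℝ) :
    HasBoundedDerivsOn ℝ (fun x => sin (a * x)) univ := by
  refine (hasBoundedDerivsOn_iff_of_isOpen isOpen_univ).2
    ⟨by fun_prop, fun k => ⟨‖a ^ k‖, fun x _ => ?_⟩⟩
  rw [iteratedDeriv_comp_const_mul contDiff_sin, norm_mul]
  exact mul_le_of_le_one_right (norm_nonneg _) (abs_iteratedDeriv_sin_le_one k _)

theorem hasBoundedDerivsOn_sin_const_mul_sqrt (a : ℝ) {b : ℝ} (hb : 0 < b) :
    HasBoundedDerivsOn ℝ (fun t => sin (a * √t)) (Ioi b) := by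
  have half_le {k : ℕ} (hk : 1 ≤ k) : (1 / 2 : ℝ) ≤ k :=
    one_half_lt_one.le.trans (by exact_mod_cast hk)
  simpa only [Function.comp_def, ← sqrt_eq_rpow] using
    (hasBoundedDerivsOn_sin_const_mul a).comp (contDiffOn_rpow_const_Ioi hb (1 / 2))
      (fun k hk => exists_norm_iteratedFDerivWithin_rpow_le hb (half_le hk))
      uniqueDiffOn_univ (uniqueDiffOn_Ioi b) (mapsTo_univ _ _)

end RealLine

section PowerSeries

theorem contDiff_tsum_mul_pow {c : ℕ → ℝ}
    (hc : ∀ r : ℝ, 0 ≤ r → Summable fun n => c n * r ^ n) :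
    ContDiff ℝ ω fun t => ∑' n, c n * t ^ n := by
  set p := FormalMultilinearSeries.ofScalars ℝ c
  have radius_eq_top : p.radius = ⊤ := p.radius_eq_top_of_summable_norm fun r => by
    simpa [p, FormalMultilinearSeries.ofScalars_norm] using (hc r r.2).norm
  have hp : HasFPowerSeriesOnBall p.sum p 0 ⊤ :=
    radius_eq_top ▸ p.hasFPowerSeriesOnBall (by simp [radius_eq_top])
  have sum_eq : p.sum = fun t => ∑' n, c n * t ^ n :=
    FormalMultilinearSeries.ofScalarsSum_eq_tsum ..
  rw [← sum_eq]
  exact AnalyticOnNhd.contDiff fun x _ => hp.analyticAt_of_mem (by simp)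

theorem exists_contDiff_comp_sq_of_hasSum {c : ℕ → ℝ} {f : ℝ → ℝ}
    (hf : ∀ x, HasSum (fun n => c n * (x ^ 2) ^ n) (f x)) :
    ∃ g : ℝ → ℝ, ContDiff ℝ ω g ∧ ∀ x, g (x ^ 2) = f x :=
  ⟨_, contDiff_tsum_mul_pow fun r hr => by simpa only [sq_sqrt hr] using (hf √r).summable,
    fun x => (hf x).tsum_eq⟩

end PowerSeries

section SinRemainder

theorem hasSum_sin_sub_self (x : ℝ) :
    HasSum (fun n : ℕ => (-1) ^ (n + 1) * x ^ (2 * n + 3) / (2 * n + 3).factorial) (sin x - x) := by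
  simpa [mul_add] using (hasSum_nat_add_iff' 1).2 (hasSum_sin x)

/-- The function `(a * x - sin (a * x)) / x ^ 3`, extended continuously to `x = 0`. For `a = 2` it
is the function `F̃₁` of the paper. -/
noncomputable def sinRemainder (a x : ℝ) : ℝ :=
  if x = 0 then a ^ 3 / 6 else a / x ^ 2 - sin (a * x) / x ^ 3

theorem hasSum_sinRemainder (a x : ℝ) :
    HasSum (fun n : ℕ => (-1) ^ n * a ^ (2 * n + 3) / (2 * n + 3).factorial * (x ^ 2) ^ n)
      (sinRemainder a x) := by
  rcases eq_or_ne x 0 with rfl | hx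
  · convert hasSum_single (0 : ℕ) fun n hn => ?_ using 1
    · simp [sinRemainder, Nat.factorial]
    · simp [hn]
  · have value_eq : sinRemainder a x = -1 / x ^ 3 * (sin (a * x) - a * x) := by
      rw [sinRemainder, if_neg hx]
      field_simp
      ring
    rw [value_eq]
    refine ((hasSum_sin_sub_self (a * x)).mul_left (-1 / x ^ 3)).congr_fun fun n => ?_
    field_simp
    ring

theorem sinRemainder_sqrt (a : ℝ) {t : ℝ} (ht : 0 < t) :
    sinRemainder a √t = a * t ^ (-1 : ℝ) - sin (a * √t) * t ^ (-3 / 2 : ℝ) := by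
  have sqrt_cube : t ^ (-3 / 2 : ℝ) = (√t ^ 3)⁻¹ := by
    rw [sqrt_eq_rpow, ← rpow_natCast, ← rpow_mul ht.le, ← rpow_neg ht.le]
    norm_num
  rw [sinRemainder, if_neg (sqrt_pos.2 ht).ne', sqrt_cube, rpow_neg_one, sq_sqrt ht.le,
    div_eq_mul_inv, div_eq_mul_inv]

theorem hasBoundedDerivsOn_sinRemainder_sqrt (a : ℝ) {b : ℝ} (hb : 0 < b) :
    HasBoundedDerivsOn ℝ (fun t => sinRemainder a √t) (Ioi b) := by
  have hs : UniqueDiffOn ℝ (Ioi b) := uniqueDiffOn_Ioi b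
  have linear_part := (hasBoundedDerivsOn_rpow_const hb (r := -1) (by norm_num)).const_smul hs a
  have sin_part := (hasBoundedDerivsOn_sin_const_mul_sqrt a hb).mul
    (hasBoundedDerivsOn_rpow_const hb (r := -3 / 2) (by norm_num)) hs
  exact (linear_part.sub sin_part hs).congr fun t ht => sinRemainder_sqrt a (hb.trans ht)

theorem exists_hasBoundedDerivsOn_comp_sq_eq_sinRemainder (a : ℝ) :
    ∃ g : ℝ → ℝ, HasBoundedDerivsOn ℝ g univ ∧ ∀ x, g (x ^ 2) = sinRemainder a x := by
  obtain ⟨G, G_contDiff, G_sq⟩ := exists_contDiff_comp_sq_of_hasSum (hasSum_sinRemainder a)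
  have G_bounded : HasBoundedDerivsOn ℝ G (Ioi 1) :=
    (hasBoundedDerivsOn_sinRemainder_sqrt a one_pos).congr fun t ht => by
      simp only [← G_sq, sq_sqrt (zero_le_one.trans (le_of_lt ht))]
  obtain ⟨g, g_bounded, g_eq_G⟩ := G_bounded.exists_eqOn_Ici (G_contDiff.of_le le_top) zero_le_one
  exact ⟨g, g_bounded, fun x => (g_eq_G (sq_nonneg x)).trans (G_sq x)⟩

end SinRemainder

theorem skyrme_stmt17 :
    ∃ F₁ : ℝ → ℝ, ContDiff ℝ (⊤ : ℕ∞) F₁ ∧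
      (∀ k : ℕ, ∃ C : ℝ, ∀ x : ℝ, |iteratedDeriv k F₁ x| ≤ C) ∧
      (∀ x : ℝ, F₁ (x ^ 2) =
        if x = 0 then 4/3 else 2 / x ^ 2 - Real.sin (2 * x) / x ^ 3) := by
  obtain ⟨F₁, hF₁, F₁_sq⟩ := exists_hasBoundedDerivsOn_comp_sq_eq_sinRemainder 2
  obtain ⟨F₁_contDiff, F₁_bound⟩ := (hasBoundedDerivsOn_iff_of_isOpen isOpen_univ).1 hF₁
  refine ⟨F₁, contDiffOn_univ.1 F₁_contDiff,
    fun k => (F₁_bound k).imp fun C hC x => hC x (mem_univ x), fun x => ?_⟩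
  have value_at_zero : (2 : ℝ) ^ 3 / 6 = 4 / 3 := by norm_num
  rw [F₁_sq, sinRemainder, value_at_zero]
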